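/- The family of regular ω-languages over X is a Boolean algebra: if F and G ⊆ X^ω are regular ω-languages, then F ∪ G, F ∩ G and X^ω \ F are regular ω-languages. -/

import Mathlib

open Set MeasureTheory Computability

namespace AutoBaire

/-- The Cantor topology on the space of ω-words over `X`:
the product of the discrete topology on `X`. -/
def cantorTop (X : Type) : TopologicalSpace (ℕ → X) :=
  @Pi.topologicalSpace ℕ (fun _ => X) (fun _ => ⊥)

/-- The Borel σ-algebra of the Cantor space. -/
def cantorBorel (X : Type) : MeasurableSpace (ℕ → X) :=
  @borel (ℕ → X) (cantorTop X)

variable {X : Type}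

/-- Concatenation `w·ξ` of a finite word with an ω-word. -/
def wcat (w : List X) (ξ : ℕ → X) : ℕ → X :=
  Stream'.appendStream' w ξ

/-- The ball (cylinder) `w·X^ω`. -/
def cyl (w : List X) : Set (ℕ → X) := {ξ | ∃ η : ℕ → X, ξ = wcat w η}

/-- The ω-language `W·A` for a language `W` and an ω-language `A`. -/
def catOmega (W : Language X) (A : Set (ℕ → X)) : Set (ℕ → X) :=
  {ξ | ∃ w ∈ W, ∃ η ∈ A, ξ = wcat w η}

/-- `V^ω`: the set of ω-words that are infinite concatenations
`v₁·v₂·⋯` of non-empty words `vᵢ ∈ V`. -/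
def omegaPow (V : Language X) : Set (ℕ → X) :=
  {ξ | ∃ f : ℕ → List X, (∀ i, f i ∈ V ∧ f i ≠ []) ∧
    ∀ k, ξ ∈ cyl (((List.range k).map f).flatten)}

/-- Regular languages: those obtained from finite languages via the operations
union, concatenation and star. -/
inductive IsRegLang : Language X → Prop
  | finite (W : Language X) : (W : Set (List X)).Finite → IsRegLang W
  | union (W V : Language X) : IsRegLang W → IsRegLang V → IsRegLang (W + V)
  | concat (W V : Language X) : IsRegLang W → IsRegLang V → IsRegLang (W * V)
  | star (W : Language X) : IsRegLang W → IsRegLang (W∗)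

/-- Regular ω-languages: finite unions `⋃ᵢ Wᵢ·Vᵢ^ω` with `Wᵢ, Vᵢ` regular. -/
def IsRegOmega (F : Set (ℕ → X)) : Prop :=
  ∃ (n : ℕ) (W V : Fin n → Language X),
    (∀ i, IsRegLang (W i) ∧ IsRegLang (V i)) ∧
    F = ⋃ i, catOmega (W i) (omegaPow (V i))

/-- `X*·w·X^ω`: the set of ω-words containing `w` as an infix. -/
def infixOcc (w : List X) : Set (ℕ → X) :=
  {ξ | ∃ u : List X, ξ ∈ cyl (u ++ w)}

/-- An ω-word is disjunctive if every finite word occurs in it as an infix. -/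
def Disjunctive (ξ : ℕ → X) : Prop := ∀ w : List X, ξ ∈ infixOcc w

/-- Ultimately periodic ω-words: `ξ = w·v·v·v·⋯` with `v ≠ e`. -/
def UltPeriodic (ξ : ℕ → X) : Prop :=
  ∃ (w v : List X) (h : v ≠ []), ξ = wcat w (Stream'.cycle v h)

/-- The Automatic Baire property: `F Δ E ⊆ F'` for some regular open
ω-language `E` and some regular ω-language `F'` of first Baire category. -/
def HasABP (F : Set (ℕ → X)) : Prop :=
  ∃ E F' : Set (ℕ → X),
    IsRegOmega E ∧ @IsOpen _ (cantorTop X) E ∧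
    IsRegOmega F' ∧ @IsMeagre _ (cantorTop X) F' ∧
    symmDiff F E ⊆ F'

/-- The measure is finite and non-null: `0 < μ(X^ω) < ∞`. -/
def FiniteNonNull (μ : @MeasureTheory.Measure (ℕ → X) (cantorBorel X)) : Prop :=
  0 < μ Set.univ ∧ μ Set.univ < ⊤

/-- `supp(μ) = X^ω`: every non-empty open set has positive measure. -/
def FullSupport (μ : @MeasureTheory.Measure (ℕ → X) (cantorBorel X)) : Prop :=
  ∀ U : Set (ℕ → X), @IsOpen _ (cantorTop X) U → U.Nonempty → 0 < μ U

/-- The balance condition: there is `c > 0` such that for all `w ∈ X*`, `x ∈ X`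
either `μ(wx·X^ω) = 0` or `c·μ(w·X^ω) ≤ μ(wx·X^ω)`. -/
def Balanced (μ : @MeasureTheory.Measure (ℕ → X) (cantorBorel X)) : Prop :=
  ∃ c : ENNReal, 0 < c ∧ ∀ (w : List X) (x : X),
    μ (cyl (w ++ [x])) = 0 ∨ c * μ (cyl w) ≤ μ (cyl (w ++ [x]))

/-!
Colour the finite words with finitely many colours so that the colour of a concatenation depends
only on the colours of its factors, and call an ω-language saturated if membership is determined by
the colours of the factors of any infinite factorization. A saturated ω-language is regular: by
Ramsey's theorem every ω-word factors so that all factors but the first have the same colour, hence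
the ω-language is a finite union of sets `W·V^ω` with `W` and `V` colour classes, which are
regular. Conversely, take a colouring for which `W·V∗` and `V∗` are unions of colour classes, and
refine it by recording, for each word, the pairs of colours that arise by cutting it in two. Then
the cuts of one ω-word into factors from `V∗` can be copied to any ω-word with an equally coloured
factorization, so `W·V^ω` is saturated. Saturation is symmetric in the two ω-words
compared and passes to products of colourings, so complements and unions are immediate.
-/

open Filter

section Kleene

theorem mem_sum {ι : Type*} {s : Finset ι} {L : ι → Language X} {u : List X} :
    u ∈ ∑ i ∈ s, L i ↔ ∃ i ∈ s, u ∈ L i := by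
  classical
  induction s using Finset.induction_on with
  | empty => simp [Language.notMem_zero]
  | insert i s hi ih => rw [Finset.sum_insert hi, Language.mem_add, ih, Finset.exists_mem_insert]

theorem append_mem_kstar {V : Language X} {u v : List X} (hu : u ∈ V∗) (hv : v ∈ V∗) :
    u ++ v ∈ V∗ := by
  rw [← kstar_mul_kstar V]
  exact Language.append_mem_mul hu hv

theorem mem_kstar_of_mem {V : Language X} {u : List X} (hu : u ∈ V) : u ∈ V∗ :=
  (le_kstar : V ≤ V∗) hu

/-- The words that remain of `x` after a prefix in `W` has been removed: the left quotients of
`W * V` and `V∗` by `x` are built from the left quotients of `V` by these words. -/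
def remainders (W : Language X) (x : List X) : Set (List X) :=
  {y | ∃ w ∈ W, w ++ y = x}

theorem leftQuotient_mul (W V : Language X) (x : List X) :
    (W * V).leftQuotient x =
      W.leftQuotient x * V + ⨆ y ∈ remainders W x, V.leftQuotient y := by
  ext z
  simp only [Language.mem_leftQuotient, Language.mem_mul, Language.mem_add, Language.mem_iSup,
    remainders, Set.mem_ofPred_eq]
  constructor
  · rintro ⟨w, hw, v, hv, h⟩
    obtain ⟨c, rfl, rfl⟩ | ⟨c, rfl, rfl⟩ := List.append_eq_append_iff.1 h
    · exact .inr ⟨c, ⟨w, hw, rfl⟩, hv⟩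
    · exact .inl ⟨c, hw, v, hv, rfl⟩
  · rintro (⟨c, hc, v, hv, rfl⟩ | ⟨y, ⟨w, hw, rfl⟩, hy⟩)
    · exact ⟨x ++ c, hc, v, hv, by simp⟩
    · exact ⟨w, hw, y ++ z, hy, by simp⟩

-- The summand `1` covers a cut at the end of the last factor.
theorem exists_cut_of_append_mem_kstar {V : Language X} {x z : List X} (h : x ++ z ∈ V∗) :
    ∃ w y p q, x = w ++ y ∧ z = p ++ q ∧ w ∈ V∗ ∧ y ++ p ∈ V + 1 ∧ q ∈ V∗ := by
  obtain ⟨S, hxz, hS⟩ := h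
  induction S generalizing x with
  | nil =>
    obtain ⟨rfl, rfl⟩ := List.append_eq_nil_iff.1 hxz
    exact ⟨[], [], [], [], rfl, rfl, Language.nil_mem_kstar V, .inr rfl, Language.nil_mem_kstar V⟩
  | cons v S ih =>
    obtain ⟨hv, hSV⟩ := List.forall_mem_cons.1 hS
    obtain ⟨p, rfl, rfl⟩ | ⟨c, rfl, hcz⟩ := List.append_eq_append_iff.1 hxz
    · exact ⟨[], x, p, S.flatten, rfl, rfl, Language.nil_mem_kstar V, .inl hv,
        Language.join_mem_kstar hSV⟩
    · obtain ⟨w, y, p, q, rfl, rfl, hw, hyp, hq⟩ := ih hcz.symm hSV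
      exact ⟨v ++ w, y, p, q, (List.append_assoc ..).symm, rfl,
        append_mem_kstar (mem_kstar_of_mem hv) hw, hyp, hq⟩

theorem leftQuotient_kstar (V : Language X) (x : List X) :
    (V∗).leftQuotient x = (⨆ y ∈ remainders V∗ x, (V + 1).leftQuotient y) * V∗ := by
  ext z
  simp only [Language.mem_leftQuotient, Language.mem_mul, Language.mem_iSup, remainders,
    Set.mem_ofPred_eq]
  constructor
  · intro h
    obtain ⟨w, y, p, q, rfl, rfl, hw, hyp, hq⟩ := exists_cut_of_append_mem_kstar h
    exact ⟨p, ⟨y, ⟨w, hw, rfl⟩, hyp⟩, q, hq, rfl⟩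
  · rintro ⟨p, ⟨y, ⟨w, hw, rfl⟩, hyp⟩, q, hq, rfl⟩
    have hyp' : y ++ p ∈ V∗ := hyp.elim mem_kstar_of_mem fun h => h ▸ Language.nil_mem_kstar V
    simpa using append_mem_kstar hw (append_mem_kstar hyp' hq)

theorem finite_range_iSup_leftQuotient {V : Language X} (hV : V.IsRegular)
    (S : List X → Set (List X)) :
    (Set.range fun x => ⨆ y ∈ S x, V.leftQuotient y).Finite := by
  refine (hV.finite_range_leftQuotient.finite_subsets.image sSup).subset ?_
  rintro _ ⟨x, rfl⟩
  exact ⟨V.leftQuotient '' S x, Set.image_subset_range .., sSup_image⟩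

theorem isRegular_of_finite {L : Language X} (hL : (L : Set (List X)).Finite) : L.IsRegular := by
  refine .of_finite_range_leftQuotient
    ((hL.biUnion fun w _ => List.finite_toSet w.tails).finite_subsets.subset ?_)
  rintro _ ⟨x, rfl⟩ z hz
  exact Set.mem_biUnion hz (by simp)

theorem isRegular_mul {W V : Language X} (hW : W.IsRegular) (hV : V.IsRegular) :
    (W * V).IsRegular := by
  refine .of_finite_range_leftQuotient ((hW.finite_range_leftQuotient.image2 (· * V + ·)
    (finite_range_iSup_leftQuotient hV (remainders W))).subset ?_)
  rintro _ ⟨x, rfl⟩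
  exact ⟨_, ⟨x, rfl⟩, _, ⟨x, rfl⟩, (leftQuotient_mul W V x).symm⟩

theorem isRegular_kstar {V : Language X} (hV : V.IsRegular) : (V∗).IsRegular := by
  have hV1 : (V + 1).IsRegular := hV.add (isRegular_of_finite (Set.finite_singleton []))
  refine .of_finite_range_leftQuotient
    (((finite_range_iSup_leftQuotient hV1 (remainders V∗)).image (· * V∗)).subset ?_)
  rintro _ ⟨x, rfl⟩
  exact ⟨_, ⟨x, rfl⟩, (leftQuotient_kstar V x).symm⟩

theorem IsRegLang.isRegular {L : Language X} (h : IsRegLang L) : L.IsRegular := by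
  induction h with
  | finite W hW => exact isRegular_of_finite hW
  | union W V _ _ hW hV => exact hW.add hV
  | concat W V _ _ hW hV => exact isRegular_mul hW hV
  | star W _ hW => exact isRegular_kstar hW

theorem IsRegLang.sum {ι : Type*} {s : Finset ι} {L : ι → Language X}
    (h : ∀ i ∈ s, IsRegLang (L i)) : IsRegLang (∑ i ∈ s, L i) :=
  Finset.sum_induction L IsRegLang (fun _ _ => .union _ _) (.finite 0 Set.finite_empty) h

-- Gaussian elimination: Arden's lemma solves the equation of the first unknown, and substituting
-- the solution into the others preserves the condition on the empty word.
theorem isRegLang_of_linear_system {n : ℕ} {A : Fin n → Fin n → Language X}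
    {B L : Fin n → Language X} (hA : ∀ i j, IsRegLang (A i j)) (hnil : ∀ i j, [] ∉ A i j)
    (hB : ∀ i, IsRegLang (B i)) (hL : ∀ i, L i = ∑ j, A i j * L j + B i) (i : Fin n) :
    IsRegLang (L i) := by
  induction n with
  | zero => exact i.elim0
  | succ n ih =>
    have first : L 0 = (A 0 0)∗ * (∑ j : Fin n, A 0 j.succ * L j.succ + B 0) := by
      refine (Language.self_eq_mul_add_iff (hnil 0 0)).1 ((hL 0).trans ?_)
      rw [Fin.sum_univ_succ, add_assoc]
    have rest : ∀ i : Fin n, IsRegLang (L i.succ) := by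
      refine ih (A := fun i j => A i.succ 0 * (A 0 0)∗ * A 0 j.succ + A i.succ j.succ)
        (B := fun i => A i.succ 0 * (A 0 0)∗ * B 0 + B i.succ)
        (fun i j => .union _ _ (.concat _ _ (.concat _ _ (hA _ _) (.star _ (hA _ _))) (hA _ _))
          (hA _ _)) (fun i j => ?_)
        (fun i => .union _ _ (.concat _ _ (.concat _ _ (hA _ _) (.star _ (hA _ _))) (hB _))
          (hB _)) (fun i => ?_)
      · rintro (h | h)
        · obtain ⟨u, -, v, hv, huv⟩ := Language.mem_mul.1 h
          exact hnil 0 j.succ ((List.append_eq_nil_iff.1 huv).2 ▸ hv)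
        · exact hnil _ _ h
      · rw [hL i.succ, Fin.sum_univ_succ, first]
        simp only [mul_add, add_mul, Finset.mul_sum, Finset.sum_add_distrib, mul_assoc]
        abel
    refine Fin.cases ?_ rest i
    rw [first]
    exact .concat _ _ (.star _ (hA 0 0))
      (.union _ _ (.sum fun j _ => .concat _ _ (hA _ _) (rest j)) (hB 0))

/-- The letters leading from `q` to `q'`, as one-letter words: the coefficients of the linear
system satisfied by the languages accepted from the states of an automaton. -/
def transitionWords {σ : Type*} (M : DFA X σ) (q q' : σ) : Language X :=
  {u | ∃ x, M.step q x = q' ∧ [x] = u}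

theorem acceptsFrom_eq_sum {σ : Type*} [Fintype σ] (M : DFA X σ) (q : σ) :
    M.acceptsFrom q =
      ∑ q', transitionWords M q q' * M.acceptsFrom q' + 1 ⊓ M.acceptsFrom q := by
  ext u
  simp only [Language.mem_add, mem_sum, Finset.mem_univ, true_and, Language.mem_mul]
  constructor
  · intro h
    cases u with
    | nil => exact .inr ⟨rfl, h⟩
    | cons x u => exact .inl ⟨M.step q x, [x], ⟨x, rfl, rfl⟩, u, h, rfl⟩
  · rintro (⟨_, _, ⟨x, rfl, rfl⟩, v, hv, rfl⟩ | ⟨-, h⟩)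
    · exact hv
    · exact h

theorem isRegLang_of_isRegular [Finite X] {L : Language X} (h : L.IsRegular) : IsRegLang L := by
  obtain ⟨σ, _, M, rfl⟩ := h
  rw [← DFA.accepts_reindex M (Fintype.equivFin σ)]
  refine isRegLang_of_linear_system (fun q q' => .finite _ ?_) (fun q q' => ?_)
    (fun q => .finite _ ?_) (acceptsFrom_eq_sum (DFA.reindex (Fintype.equivFin σ) M)) _
  · refine (Set.finite_range fun x : X => [x]).subset ?_
    rintro _ ⟨x, -, rfl⟩
    exact ⟨x, rfl⟩
  · rintro ⟨x, -, h⟩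
    exact List.cons_ne_nil x [] h
  · exact (Set.finite_singleton []).subset Set.inter_subset_left

end Kleene

section Slice

/-- The factor `ξ(i)⋯ξ(j-1)` of an ω-word; it is empty when `j ≤ i`. -/
def slice (ξ : ℕ → X) (i j : ℕ) : List X :=
  Stream'.take (j - i) (Stream'.drop i ξ)

@[simp]
theorem slice_self (ξ : ℕ → X) (i : ℕ) : slice ξ i i = [] := by
  simp [slice]

@[simp]
theorem length_slice (ξ : ℕ → X) (i j : ℕ) : (slice ξ i j).length = j - i :=
  Stream'.length_take ..

theorem slice_ne_nil (ξ : ℕ → X) {i j : ℕ} (h : i < j) : slice ξ i j ≠ [] :=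
  List.ne_nil_of_length_pos (by simpa using h)

theorem slice_append_slice (ξ : ℕ → X) {i j k : ℕ} (hij : i ≤ j) (hjk : j ≤ k) :
    slice ξ i j ++ slice ξ j k = slice ξ i k := by
  let s : Stream' X := ξ
  change (s.drop i).take (j - i) ++ (s.drop j).take (k - j) = (s.drop i).take (k - i)
  rw [← Nat.sub_add_sub_cancel hjk hij, Nat.add_comm (k - j), Stream'.take_add, Stream'.drop_drop,
    Nat.add_sub_cancel' hij]

theorem exists_of_slice_eq_append {ξ : ℕ → X} {i j : ℕ} {u v : List X} (hij : i ≤ j)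
    (h : slice ξ i j = u ++ v) :
    ∃ m, i ≤ m ∧ m ≤ j ∧ slice ξ i m = u ∧ slice ξ m j = v := by
  have hlen : j - i = u.length + v.length := by simpa using congrArg List.length h
  have hm : i + u.length ≤ j := by omega
  rw [← slice_append_slice ξ (Nat.le_add_right i u.length) hm] at h
  exact ⟨i + u.length, Nat.le_add_right .., hm, List.append_inj h (by simp)⟩

theorem slice_drop (ξ : ℕ → X) (m i j : ℕ) :
    slice (Stream'.drop m ξ) i j = slice ξ (m + i) (m + j) := by
  let s : Stream' X := ξ
  change ((s.drop m).drop i).take (j - i) = (s.drop (m + i)).take (m + j - (m + i))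
  rw [Stream'.drop_drop, Nat.add_sub_add_left]

theorem slice_wcat (w : List X) (η : ℕ → X) (i j : ℕ) :
    slice (wcat w η) (w.length + i) (w.length + j) = slice η i j := by
  rw [← slice_drop]
  exact congrArg (slice · i j) (Stream'.drop_append_stream w η)

theorem slice_wcat_length (w : List X) (η : ℕ → X) : slice (wcat w η) 0 w.length = w := by
  induction w with
  | nil => rfl
  | cons x w ih => exact congrArg (x :: ·) ih

theorem wcat_slice_drop (ξ : ℕ → X) (m : ℕ) : wcat (slice ξ 0 m) (Stream'.drop m ξ) = ξ :=
  Stream'.append_take_drop m ξ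

theorem flatten_map_slice (ξ : ℕ → X) {k : ℕ → ℕ} (hk : Monotone k) (n : ℕ) :
    ((List.range n).map fun i => slice ξ (k i) (k (i + 1))).flatten = slice ξ (k 0) (k n) := by
  induction n with
  | zero => simp
  | succ n ih =>
    simp [List.range_succ, ih, slice_append_slice ξ (hk n.zero_le) (hk n.le_succ)]

theorem mem_omegaPow {V : Language X} {ξ : ℕ → X} :
    ξ ∈ omegaPow V ↔
      ∃ k : ℕ → ℕ, StrictMono k ∧ k 0 = 0 ∧ ∀ i, slice ξ (k i) (k (i + 1)) ∈ V := by
  constructor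
  · rintro ⟨f, hf, hξ⟩
    let P (n : ℕ) : List X := ((List.range n).map f).flatten
    have P_succ (n : ℕ) : P (n + 1) = P n ++ f n := by simp [P, List.range_succ]
    have slice_P (n : ℕ) : slice ξ 0 (P n).length = P n := by
      obtain ⟨η, hη⟩ := hξ n
      rw [hη]
      exact slice_wcat_length (P n) η
    have P_strictMono : StrictMono fun n => (P n).length := strictMono_nat_of_lt_succ fun n => by
      simpa [P_succ] using List.length_pos_of_ne_nil (hf n).2
    refine ⟨_, P_strictMono, rfl, fun n => ?_⟩
    have h := slice_append_slice ξ (Nat.zero_le _) (P_strictMono.monotone n.le_succ)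
    have h_factor : slice ξ (P n).length (P (n + 1)).length = f n := by
      rwa [slice_P, slice_P, P_succ, List.append_cancel_left_eq, ← P_succ] at h
    rw [h_factor]
    exact (hf n).1
  · rintro ⟨k, hk, hk0, hV⟩
    refine ⟨_, fun i => ⟨hV i, slice_ne_nil ξ (hk i.lt_succ_self)⟩, fun n => ?_⟩
    rw [flatten_map_slice ξ hk.monotone, hk0]
    exact ⟨_, (wcat_slice_drop ξ (k n)).symm⟩

theorem mem_catOmega_omegaPow {W V : Language X} {ξ : ℕ → X} :
    ξ ∈ catOmega W (omegaPow V) ↔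
      ∃ k : ℕ → ℕ, StrictMono k ∧ slice ξ 0 (k 0) ∈ W ∧ ∀ i, slice ξ (k i) (k (i + 1)) ∈ V := by
  constructor
  · rintro ⟨w, hw, η, hη, rfl⟩
    obtain ⟨k, hk, hk0, hV⟩ := mem_omegaPow.1 hη
    refine ⟨fun i => w.length + k i, hk.const_add _, ?_, fun i => ?_⟩
    · simpa [hk0, slice_wcat_length] using hw
    · simpa [slice_wcat] using hV i
  · rintro ⟨k, hk, hW, hV⟩
    refine ⟨_, hW, _, mem_omegaPow.2 ⟨fun i => k i - k 0, ?_, Nat.sub_self _, fun i => ?_⟩,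
      (wcat_slice_drop ξ (k 0)).symm⟩
    · exact fun i j hij => Nat.sub_lt_sub_right (hk.monotone i.zero_le) (hk hij)
    · rw [slice_drop, Nat.add_sub_cancel' (hk.monotone i.zero_le),
        Nat.add_sub_cancel' (hk.monotone (i + 1).zero_le)]
      exact hV i

theorem exists_strictMono_forall_rel {α : Type*} [Preorder α] {P : α → Prop} {R : α → α → Prop}
    {a₀ : α} (h₀ : P a₀) (step : ∀ a, P a → ∃ b, a < b ∧ P b ∧ R a b) :
    ∃ k : ℕ → α, StrictMono k ∧ k 0 = a₀ ∧ ∀ i, R (k i) (k (i + 1)) := by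
  choose next lt_next next_mem rel_next using step
  let k (i : ℕ) : {a // P a} := (fun a => ⟨next a a.2, next_mem a a.2⟩)^[i] ⟨a₀, h₀⟩
  have k_succ (i : ℕ) : (k (i + 1) : α) = next (k i) (k i).2 := by
    simp only [k, Function.iterate_succ_apply']
  refine ⟨fun i => k i, strictMono_nat_of_lt_succ fun i => ?_, rfl, fun i => ?_⟩
  · exact (lt_next _ _).trans_eq (k_succ i).symm
  · change R (k i) (k (i + 1))
    rw [k_succ]
    exact rel_next _ _

theorem slice_mem_kstar {V : Language X} {ξ : ℕ → X} {k : ℕ → ℕ} (hk : Monotone k)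
    (hV : ∀ i, slice ξ (k i) (k (i + 1)) ∈ V∗) {i j : ℕ} (hij : i ≤ j) :
    slice ξ (k i) (k j) ∈ V∗ := by
  induction j, hij using Nat.le_induction with
  | base => simpa using Language.nil_mem_kstar V
  | succ j hij ih =>
    rw [← slice_append_slice ξ (hk hij) (hk j.le_succ)]
    exact append_mem_kstar ih (hV j)

theorem mem_catOmega_omegaPow_iff_kstar {W V : Language X} {ξ : ℕ → X} :
    ξ ∈ catOmega W (omegaPow V) ↔ ∃ k : ℕ → ℕ, Monotone k ∧ Tendsto k atTop atTop ∧
      slice ξ 0 (k 0) ∈ W * V∗ ∧ ∀ i, slice ξ (k i) (k (i + 1)) ∈ V∗ := by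
  rw [mem_catOmega_omegaPow]
  constructor
  · rintro ⟨k, hk, hW, hV⟩
    exact ⟨k, hk.monotone, hk.tendsto_atTop,
      ⟨_, hW, [], Language.nil_mem_kstar V, List.append_nil _⟩, fun i => mem_kstar_of_mem (hV i)⟩
  rintro ⟨k, hk, hk_top, ⟨w, hw, v, hv, hwv⟩, hV⟩
  obtain ⟨m, -, hmk, rfl, rfl⟩ := exists_of_slice_eq_append (Nat.zero_le _) hwv.symm
  have next_cut (p : ℕ) : (∃ i, p ≤ k i ∧ slice ξ p (k i) ∈ V∗) →
      ∃ q, p < q ∧ (∃ i, q ≤ k i ∧ slice ξ q (k i) ∈ V∗) ∧ slice ξ p q ∈ V := by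
    rintro ⟨i, hpi, hi⟩
    obtain ⟨j, hij, hpj⟩ := ((eventually_ge_atTop i).and (hk_top.eventually_gt_atTop p)).exists
    have hj : slice ξ p (k j) ∈ V∗ := by
      rw [← slice_append_slice ξ hpi (hk hij)]
      exact append_mem_kstar hi (slice_mem_kstar hk hV hij)
    obtain ⟨_ | ⟨v, S⟩, hS, hSV⟩ := Language.mem_kstar_iff_exists_nonempty.1 hj
    · exact absurd hS (slice_ne_nil ξ hpj)
    obtain ⟨⟨hv, hv_ne⟩, hSV'⟩ := List.forall_mem_cons.1 hSV
    obtain ⟨q, hpq, hqj, rfl, hq⟩ := exists_of_slice_eq_append hpj.le hS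
    refine ⟨q, hpq.lt_of_ne ?_,
      ⟨j, hqj, hq ▸ Language.join_mem_kstar fun y hy => (hSV' y hy).1⟩, hv⟩
    rintro rfl
    exact hv_ne (slice_self ξ p)
  obtain ⟨l, hl, rfl, hlV⟩ := exists_strictMono_forall_rel ⟨0, hmk, hv⟩ next_cut
  exact ⟨l, hl, hw, hlV⟩

end Slice

section Colouring

variable {M N : Type*} {φ : List X → M}

/-- A colouring of finite words is multiplicative if the colour of a concatenation depends only on
the colours of the two factors, i.e. if the kernel of `φ` is a congruence of the free monoid. -/
def IsMultiplicative (φ : List X → M) : Prop :=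
  ∀ ⦃u u' v v'⦄, φ u = φ u' → φ v = φ v' → φ (u ++ v) = φ (u' ++ v')

/-- The colouring `φ` saturates the language `L` if `L` is a union of colour classes. -/
def Saturates (φ : List X → M) (L : Language X) : Prop :=
  ∀ ⦃u v⦄, φ u = φ v → u ∈ L → v ∈ L

/-- The colouring `φ` saturates the ω-language `F` if membership in `F` is determined by the colours
of the factors `ξ(0)⋯ξ(a₀-1)`, `ξ(a₀)⋯ξ(a₁-1)`, … of any infinite factorization of `ξ`. -/
def SaturatesOmega (φ : List X → M) (F : Set (ℕ → X)) : Prop :=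
  ∀ ⦃ξ η : ℕ → X⦄ ⦃a b : ℕ → ℕ⦄, StrictMono a → StrictMono b →
    φ (slice ξ 0 (a 0)) = φ (slice η 0 (b 0)) →
    (∀ i, φ (slice ξ (a i) (a (i + 1))) = φ (slice η (b i) (b (i + 1)))) → ξ ∈ F → η ∈ F

/-- The ω-languages saturated by a multiplicative colouring with finitely many colours. Over a
finite alphabet they are the regular ω-languages, see `isRegOmega_iff_isFinitelySaturated`. -/
def IsFinitelySaturated (F : Set (ℕ → X)) : Prop :=
  ∃ (M : Type) (_ : Finite M) (φ : List X → M), IsMultiplicative φ ∧ SaturatesOmega φ F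

theorem IsMultiplicative.prodMk {ψ : List X → N} (hφ : IsMultiplicative φ)
    (hψ : IsMultiplicative ψ) : IsMultiplicative fun u => (φ u, ψ u) := fun _ _ _ _ hu hv =>
  Prod.ext (hφ (congrArg Prod.fst hu) (congrArg Prod.fst hv))
    (hψ (congrArg Prod.snd hu) (congrArg Prod.snd hv))

theorem IsMultiplicative.pi {ι : Type*} {M : ι → Type*} {φ : ∀ i, List X → M i}
    (hφ : ∀ i, IsMultiplicative (φ i)) : IsMultiplicative fun u i => φ i u := fun _ _ _ _ hu hv =>
  funext fun i => hφ i (congrFun hu i) (congrFun hv i)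

theorem IsMultiplicative.slice_eq_slice (hφ : IsMultiplicative φ) {ξ η : ℕ → X} {a b : ℕ → ℕ}
    (ha : Monotone a) (hb : Monotone b)
    (h : ∀ i, φ (slice ξ (a i) (a (i + 1))) = φ (slice η (b i) (b (i + 1)))) {i j : ℕ}
    (hij : i ≤ j) : φ (slice ξ (a i) (a j)) = φ (slice η (b i) (b j)) := by
  induction j, hij using Nat.le_induction with
  | base => simp
  | succ j hij ih =>
    rw [← slice_append_slice ξ (ha hij) (ha j.le_succ),
      ← slice_append_slice η (hb hij) (hb j.le_succ)]
    exact hφ ih (h j)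

theorem exists_saturates_of_isRegular {L : Language X} (hL : L.IsRegular) :
    ∃ (M : Type) (_ : Finite M) (φ : List X → M), IsMultiplicative φ ∧ Saturates φ L := by
  obtain ⟨σ, _, A, rfl⟩ := hL
  refine ⟨σ → σ, inferInstance, fun u q => A.evalFrom q u, fun u u' v v' hu hv => ?_,
    fun u v huv hu => ?_⟩
  · funext q
    simp only [DFA.evalFrom_of_append]
    exact (congrFun hv _).trans (congrArg (A.evalFrom · v') (congrFun hu q))
  · have h : A.eval u = A.eval v := congrFun huv A.start
    rwa [DFA.mem_accepts, ← h]

theorem Saturates.isRegular [Finite M] {L : Language X} (hL : Saturates φ L)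
    (hφ : IsMultiplicative φ) : L.IsRegular := by
  let quotientOf (m : M) : Language X := {v | ∃ u, φ u = m ∧ u ++ v ∈ L}
  refine .of_finite_range_leftQuotient ((Set.finite_range quotientOf).subset ?_)
  rintro _ ⟨u, rfl⟩
  refine ⟨φ u, Set.ext fun v => ⟨?_, fun h => ⟨u, rfl, h⟩⟩⟩
  rintro ⟨u', hu', h⟩
  exact hL (hφ hu' rfl) h

/-- The pairs of colours obtained by cutting a word in two. This refinement of `φ` allows a cut
inside a factor of one ω-word to be copied to an equally coloured factor of another. -/
def splits (φ : List X → M) (u : List X) : Set (M × M) :=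
  {p | ∃ x y, x ++ y = u ∧ (φ x, φ y) = p}

theorem IsMultiplicative.eq_of_splits_eq (hφ : IsMultiplicative φ) {u v : List X}
    (h : splits φ u = splits φ v) : φ u = φ v := by
  obtain ⟨x, y, rfl, hxy⟩ : (φ [], φ u) ∈ splits φ v := h ▸ ⟨[], u, rfl, rfl⟩
  obtain ⟨hx, hy⟩ := Prod.mk.inj hxy
  exact hφ hx.symm hy.symm

theorem IsMultiplicative.splits_append_subset (hφ : IsMultiplicative φ) {u u' v v' : List X}
    (hu : splits φ u = splits φ u') (hv : splits φ v = splits φ v') :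
    splits φ (u ++ v) ⊆ splits φ (u' ++ v') := by
  rintro _ ⟨x, y, hxy, rfl⟩
  obtain ⟨c, rfl, rfl⟩ | ⟨c, rfl, rfl⟩ := List.append_eq_append_iff.1 hxy
  · obtain ⟨x', c', rfl, h⟩ : (φ x, φ c) ∈ splits φ u' := hu ▸ ⟨x, c, rfl, rfl⟩
    obtain ⟨hx, hc⟩ := Prod.mk.inj h
    exact ⟨x', c' ++ v', by simp, Prod.ext hx (hφ hc (hφ.eq_of_splits_eq hv).symm)⟩
  · obtain ⟨c', y', rfl, h⟩ : (φ c, φ y) ∈ splits φ v' := hv ▸ ⟨c, y, rfl, rfl⟩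
    obtain ⟨hc, hy⟩ := Prod.mk.inj h
    exact ⟨u' ++ c', y', by simp, Prod.ext (hφ (hφ.eq_of_splits_eq hu).symm hc) hy⟩

theorem isMultiplicative_splits (hφ : IsMultiplicative φ) : IsMultiplicative (splits φ) :=
  fun _ _ _ _ hu hv =>
    (hφ.splits_append_subset hu hv).antisymm (hφ.splits_append_subset hu.symm hv.symm)

theorem exists_slice_eq_of_splits_eq {ξ η : ℕ → X} {i j k i' k' : ℕ} (hij : i ≤ j) (hjk : j ≤ k)
    (hik' : i' ≤ k') (h : splits φ (slice ξ i k) = splits φ (slice η i' k')) :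
    ∃ j', i' ≤ j' ∧ j' ≤ k' ∧ φ (slice ξ i j) = φ (slice η i' j') ∧
      φ (slice ξ j k) = φ (slice η j' k') := by
  obtain ⟨x, y, hxy, hcol⟩ : (φ (slice ξ i j), φ (slice ξ j k)) ∈ splits φ (slice η i' k') :=
    h ▸ ⟨_, _, slice_append_slice ξ hij hjk, rfl⟩
  obtain ⟨j', hij', hjk', rfl, rfl⟩ := exists_of_slice_eq_append hik' hxy.symm
  obtain ⟨hx, hy⟩ := Prod.mk.inj hcol
  exact ⟨j', hij', hjk', hx.symm, hy.symm⟩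

theorem exists_interleaving {a k : ℕ → ℕ} (ha : StrictMono a) (hk : StrictMono k) :
    ∃ s t : ℕ → ℕ, StrictMono s ∧ Monotone t ∧ s 0 = 0 ∧
      ∀ i, a (s i) ≤ k (t i) ∧ k (t i) ≤ a (s (i + 1)) := by
  let s (i : ℕ) : ℕ := (fun n => k (a n + 1))^[i] 0
  have s_succ (i : ℕ) : s (i + 1) = k (a (s i) + 1) := Function.iterate_succ_apply' ..
  have le_s_succ (i : ℕ) : a (s i) + 1 ≤ s (i + 1) := s_succ i ▸ hk.le_apply
  have hs : StrictMono s := strictMono_nat_of_lt_succ fun i =>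
    (Nat.lt_succ_of_le ha.le_apply).trans_le (le_s_succ i)
  refine ⟨s, fun i => a (s i) + 1, hs, fun i j hij => ?_, rfl, fun i => ?_⟩
  · exact Nat.succ_le_succ (ha.monotone (hs.monotone hij))
  · rw [← s_succ]
    exact ⟨(Nat.le_succ _).trans (le_s_succ i), ha.le_apply⟩

theorem IsMultiplicative.exists_cuts_of_splits_eq (hφ : IsMultiplicative φ) {ξ η : ℕ → X}
    {a b k : ℕ → ℕ} (ha : StrictMono a) (hb : StrictMono b) (hk : StrictMono k)
    (h_init : splits φ (slice ξ 0 (a 0)) = splits φ (slice η 0 (b 0)))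
    (h_step : ∀ i, splits φ (slice ξ (a i) (a (i + 1))) = splits φ (slice η (b i) (b (i + 1)))) :
    ∃ t l : ℕ → ℕ, Monotone t ∧ Monotone l ∧ Tendsto l atTop atTop ∧
      φ (slice ξ 0 (k (t 0))) = φ (slice η 0 (l 0)) ∧
      ∀ i, φ (slice ξ (k (t i)) (k (t (i + 1)))) = φ (slice η (l i) (l (i + 1))) := by
  obtain ⟨s, t, hs, ht, hs0, hst⟩ := exists_interleaving ha hk
  have hbs (i : ℕ) : b (s i) ≤ b (s (i + 1)) := hb.monotone (hs.monotone i.le_succ)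
  have h_block (i : ℕ) : splits φ (slice ξ (a (s i)) (a (s (i + 1)))) =
      splits φ (slice η (b (s i)) (b (s (i + 1)))) :=
    (isMultiplicative_splits hφ).slice_eq_slice ha.monotone hb.monotone h_step
      (hs.monotone i.le_succ)
  choose l hbl hlb h_before h_after using fun i =>
    exists_slice_eq_of_splits_eq (hst i).1 (hst i).2 (hbs i) (h_block i)
  refine ⟨t, l, ht, monotone_nat_of_le_succ fun i => (hlb i).trans (hbl (i + 1)),
    tendsto_atTop_mono hbl (hb.comp hs).tendsto_atTop, ?_, fun i => ?_⟩
  · rw [← slice_append_slice ξ (Nat.zero_le _) (hst 0).1,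
      ← slice_append_slice η (Nat.zero_le _) (hbl 0)]
    refine hφ ?_ (h_before 0)
    rw [hs0]
    exact hφ.eq_of_splits_eq h_init
  · rw [← slice_append_slice ξ (hst i).2 (hst (i + 1)).1,
      ← slice_append_slice η (hlb i) (hbl (i + 1))]
    exact hφ (h_after i) (h_before (i + 1))

theorem saturatesOmega_catOmega_omegaPow (hφ : IsMultiplicative φ) {W V : Language X}
    (hWV : Saturates φ (W * V∗)) (hV : Saturates φ V∗) :
    SaturatesOmega (splits φ) (catOmega W (omegaPow V)) := by
  intro ξ η a b ha hb h_init h_step hξ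
  obtain ⟨k, hk, hkW, hkV⟩ := mem_catOmega_omegaPow.1 hξ
  have hkV' {i j : ℕ} (hij : i ≤ j) : slice ξ (k i) (k j) ∈ V∗ :=
    slice_mem_kstar hk.monotone (fun i => mem_kstar_of_mem (hkV i)) hij
  obtain ⟨t, l, ht, hl, hl_top, h_prefix, h_factor⟩ :=
    hφ.exists_cuts_of_splits_eq ha hb hk h_init h_step
  have h_prefix_mem : slice ξ 0 (k (t 0)) ∈ W * V∗ := by
    rw [← slice_append_slice ξ (Nat.zero_le _) (hk.monotone (t 0).zero_le)]
    exact Language.append_mem_mul hkW (hkV' (t 0).zero_le)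
  exact mem_catOmega_omegaPow_iff_kstar.2 ⟨l, hl, hl_top, hWV h_prefix h_prefix_mem,
    fun i => hV (h_factor i) (hkV' (ht i.le_succ))⟩

end Colouring

section Buchi

theorem exists_strictMono_forall_eq {M : Type*} [Finite M] (c : ℕ → ℕ → M) :
    ∃ (k : ℕ → ℕ) (e : M), StrictMono k ∧ ∀ i, c (k i) (k (i + 1)) = e := by
  let U := hyperfilter ℕ
  have exists_eventually_eq (f : ℕ → M) : ∃ m, ∀ᶠ j in (U : Filter ℕ), f j = m :=
    Ultrafilter.eventually_exists_iff.1 (.of_forall fun j => ⟨f j, rfl⟩)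
  choose d hd using fun i => exists_eventually_eq (c i)
  obtain ⟨e, he⟩ := exists_eventually_eq d
  obtain ⟨i₀, hi₀⟩ := he.exists
  have next (i : ℕ) (hi : d i = e) : ∃ j, i < j ∧ d j = e ∧ c i j = e := by
    have hgt : ∀ᶠ j in (U : Filter ℕ), i < j := Nat.hyperfilter_le_atTop (eventually_gt_atTop i)
    obtain ⟨j, hij, hj, hcj⟩ := (hgt.and (he.and (hd i))).exists
    exact ⟨j, hij, hj, hcj.trans hi⟩
  obtain ⟨k, hk, -, hke⟩ := exists_strictMono_forall_rel (P := (d · = e)) hi₀ next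
  exact ⟨k, e, hk, hke⟩

theorem IsFinitelySaturated.compl {F : Set (ℕ → X)} (hF : IsFinitelySaturated F) :
    IsFinitelySaturated Fᶜ := by
  obtain ⟨M, hM, φ, hφ, hφF⟩ := hF
  exact ⟨M, hM, φ, hφ, fun ξ η a b ha hb h_init h_step hξ hη =>
    hξ (hφF hb ha h_init.symm (fun i => (h_step i).symm) hη)⟩

theorem IsFinitelySaturated.iUnion {ι : Type} [Finite ι] {F : ι → Set (ℕ → X)}
    (hF : ∀ i, IsFinitelySaturated (F i)) : IsFinitelySaturated (⋃ i, F i) := by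
  choose M hM φ hφ hφF using hF
  refine ⟨∀ i, M i, inferInstance, _, .pi hφ, fun ξ η a b ha hb h_init h_step hξ => ?_⟩
  obtain ⟨i, hi⟩ := Set.mem_iUnion.1 hξ
  exact Set.mem_iUnion.2
    ⟨i, hφF i ha hb (congrFun h_init i) (fun n => congrFun (h_step n) i) hi⟩

theorem IsFinitelySaturated.union {F G : Set (ℕ → X)} (hF : IsFinitelySaturated F)
    (hG : IsFinitelySaturated G) : IsFinitelySaturated (F ∪ G) := by
  rw [Set.union_eq_iUnion]
  exact .iUnion (Bool.forall_bool.2 ⟨hG, hF⟩)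

theorem IsFinitelySaturated.inter {F G : Set (ℕ → X)} (hF : IsFinitelySaturated F)
    (hG : IsFinitelySaturated G) : IsFinitelySaturated (F ∩ G) := by
  rw [← compl_compl (F ∩ G), Set.compl_inter]
  exact (hF.compl.union hG.compl).compl

theorem isFinitelySaturated_catOmega_omegaPow {W V : Language X} (hW : W.IsRegular)
    (hV : V.IsRegular) : IsFinitelySaturated (catOmega W (omegaPow V)) := by
  obtain ⟨M, _, φ, hφ, hφW⟩ := exists_saturates_of_isRegular (isRegular_mul hW (isRegular_kstar hV))
  obtain ⟨N, _, ψ, hψ, hψV⟩ := exists_saturates_of_isRegular (isRegular_kstar hV)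
  exact ⟨_, inferInstance, _, isMultiplicative_splits (hφ.prodMk hψ),
    saturatesOmega_catOmega_omegaPow (hφ.prodMk hψ) (fun _ _ h => hφW (congrArg Prod.fst h))
      (fun _ _ h => hψV (congrArg Prod.snd h))⟩

theorem IsRegOmega.isFinitelySaturated {F : Set (ℕ → X)} (hF : IsRegOmega F) :
    IsFinitelySaturated F := by
  obtain ⟨n, W, V, hWV, rfl⟩ := hF
  exact .iUnion fun i =>
    isFinitelySaturated_catOmega_omegaPow (hWV i).1.isRegular (hWV i).2.isRegular

theorem isRegOmega_iUnion {ι : Type*} [Finite ι] {W V : ι → Language X}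
    (h : ∀ i, IsRegLang (W i) ∧ IsRegLang (V i)) :
    IsRegOmega (⋃ i, catOmega (W i) (omegaPow (V i))) := by
  obtain ⟨n, ⟨e⟩⟩ := Finite.exists_equiv_fin ι
  exact ⟨n, W ∘ e.symm, V ∘ e.symm, fun i => h (e.symm i),
    (e.symm.surjective.iUnion_comp fun i => catOmega (W i) (omegaPow (V i))).symm⟩

/-- The words of colour `m`. -/
def colourClass {M : Type*} (φ : List X → M) (m : M) : Language X :=
  {u | φ u = m}

theorem IsMultiplicative.isRegLang_colourClass [Finite X] {M : Type*} [Finite M]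
    {φ : List X → M} (hφ : IsMultiplicative φ) (m : M) : IsRegLang (colourClass φ m) :=
  isRegLang_of_isRegular (Saturates.isRegular (fun _ _ h hu => h.symm.trans hu) hφ)

theorem SaturatesOmega.eq_iUnion {M : Type*} [Finite M] {φ : List X → M} {F : Set (ℕ → X)}
    (hF : SaturatesOmega φ F) :
    F = ⋃ p : {p : M × M // catOmega (colourClass φ p.1) (omegaPow (colourClass φ p.2)) ⊆ F},
      catOmega (colourClass φ p.1.1) (omegaPow (colourClass φ p.1.2)) := by
  refine Set.Subset.antisymm (fun ξ hξ => ?_) (Set.iUnion_subset fun p => p.2)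
  obtain ⟨k, e, hk, hke⟩ := exists_strictMono_forall_eq fun i j => φ (slice ξ i j)
  refine Set.mem_iUnion.2 ⟨⟨(φ (slice ξ 0 (k 0)), e), fun η hη => ?_⟩,
    mem_catOmega_omegaPow.2 ⟨k, hk, rfl, hke⟩⟩
  obtain ⟨b, hb, h_init, h_step⟩ := mem_catOmega_omegaPow.1 hη
  exact hF hk hb h_init.symm (fun i => (hke i).trans (h_step i).symm) hξ

theorem IsFinitelySaturated.isRegOmega [Finite X] {F : Set (ℕ → X)}
    (hF : IsFinitelySaturated F) : IsRegOmega F := by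
  obtain ⟨M, _, φ, hφ, hφF⟩ := hF
  rw [hφF.eq_iUnion]
  exact isRegOmega_iUnion fun p =>
    ⟨hφ.isRegLang_colourClass p.1.1, hφ.isRegLang_colourClass p.1.2⟩

theorem isRegOmega_iff_isFinitelySaturated [Finite X] {F : Set (ℕ → X)} :
    IsRegOmega F ↔ IsFinitelySaturated F :=
  ⟨IsRegOmega.isFinitelySaturated, IsFinitelySaturated.isRegOmega⟩

end Buchi

theorem stmt1 {X : Type} [Fintype X] (hX : 2 ≤ Fintype.card X)
    (F G : Set (ℕ → X)) (hF : IsRegOmega F) (hG : IsRegOmega G) :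
    IsRegOmega (F ∪ G) ∧ IsRegOmega (F ∩ G) ∧ IsRegOmega (Set.univ \ F) := by
  rw [isRegOmega_iff_isFinitelySaturated] at hF hG
  simp only [isRegOmega_iff_isFinitelySaturated, ← Set.compl_eq_univ_sdiff]
  exact ⟨hF.union hG, hF.inter hG, hF.compl⟩

end AutoBaire
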